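/- Let w̃ ∈ W^{3,1}(ℝ⁴) be compactly supported with DΔw̃ ∈ L^{4/3,1}(ℝ⁴). Then for every x ∈ ℝ⁴, |w̃(x) − ⨍ w̃| ≤ C ‖DG‖_{L^{4,∞}(ℝ⁴)} ‖DΔw̃‖_{L^{4/3,1}(ℝ⁴)}, where G is the fundamental solution of Δ² in ℝ⁴; in particular osc(w̃) ≤ C ‖DΔw̃‖_{L^{4/3,1}(ℝ⁴)}. -/

import Mathlib

open MeasureTheory Metric Real Filter ENNReal

noncomputable section

abbrev E4 := EuclideanSpace ℝ (Fin 4)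

/-- The Laplacian of a scalar function on `ℝ⁴`. -/
def lap (g : E4 → ℝ) (x : E4) : ℝ :=
  ∑ i : Fin 4, fderiv ℝ (fun y => fderiv ℝ g y (EuclideanSpace.single i 1)) x
    (EuclideanSpace.single i 1)

/-- Non-increasing rearrangement of `|f|` on `[0, ∞)`. -/
def rearr (f : E4 → ℝ) (t : ℝ) : ℝ :=
  sInf {s : ℝ | 0 ≤ s ∧ (volume {x : E4 | s < |f x|}).toReal ≤ t}

/-- The Lorentz `L^{p,1}` norm, `∫₀^∞ t^{1/p−1} f**(t) dt` with `f**(t) = t⁻¹∫₀ᵗ f*`. -/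
def Lp1norm (p : ℝ) (f : E4 → ℝ) : ℝ :=
  ∫ t in Set.Ioi (0:ℝ), t ^ (1/p - 1) * ((1/t) * ∫ s in Set.Ioo 0 t, rearr f s)

/-- The weak-`L^p` quasi-norm `sup_{λ>0} λ |{|f| > λ}|^{1/p}`. -/
def wnorm (p : ℝ) (f : E4 → ℝ) : ℝ≥0∞ :=
  ⨆ l ∈ Set.Ioi (0:ℝ), ENNReal.ofReal l * volume {x : E4 | l < |f x|} ^ (1/p)

/-!
Replace `log ‖y - x‖` by the smooth function `½ log (1 + c² ‖y - x‖²)`. In dimension four its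
bilaplacian is `-48 c⁴ (1 + c² ‖y - x‖²)⁻⁴`, an approximate Dirac mass as `c → ∞`, while its
gradient is dominated by that of `log ‖y - x‖` uniformly in `c`. Two applications of Green's formula
and the limit `c → ∞` therefore bound `|w x|` by a multiple of `∫ |D log(y - x)| |DΔw(y)| dy`, with
no singular integral to differentiate. This pairing is controlled by duality between weak `L⁴` and
`L^{4/3,1}`: slice `|DΔw|` into its superlevel sets by the layer-cake formula, bound the integral of
`|D log|` over each slice by a power of its volume, and reassemble the slices with the layer-cake
formula for the rearrangement of `|DΔw|`.
-/

open Module Laplacian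
open scoped Topology Gradient InnerProductSpace

section Derivatives

variable {E F : Type*} [NormedAddCommGroup E] [NormedSpace ℝ E] [NormedAddCommGroup F]
  [NormedSpace ℝ F]

lemma contDiff_smul_sub {n : WithTop ℕ∞} (c : ℝ) (x : E) : ContDiff ℝ n fun y => c • (y - x) :=
  (contDiff_id.sub contDiff_const).const_smul c

lemma fderiv_comp_smul_sub (f : E → F) (c : ℝ) (x y : E) :
    fderiv ℝ (fun y => f (c • (y - x))) y = c • fderiv ℝ f (c • (y - x)) := by
  rw [fderiv_comp_sub (f := fun y => f (c • y)), fderiv_comp_smul]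

lemma contDiff_fderiv_apply {n : WithTop ℕ∞} {f : E → F} (hf : ContDiff ℝ (n + 1) f) (v : E) :
    ContDiff ℝ n fun x => fderiv ℝ f x v :=
  (hf.fderiv_right le_rfl).clm_apply contDiff_const

lemma continuous_fderiv_apply {f : E → F} (hf : ContDiff ℝ 1 f) (v : E) :
    Continuous fun x => fderiv ℝ f x v :=
  (hf.continuous_fderiv one_ne_zero).clm_apply continuous_const

lemma fderiv_fderiv_apply {f : E → F} (hf : ContDiff ℝ 2 f) (u v x : E) :
    fderiv ℝ (fun y => fderiv ℝ f y v) x u = fderiv ℝ (fderiv ℝ f) x u v := by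
  have hf' : ContDiff ℝ 1 (fderiv ℝ f) := hf.fderiv_right le_rfl
  simp [fderiv_clm_apply (hf'.differentiable one_ne_zero x) (differentiableAt_const v)]

lemma continuous_fderiv_fderiv_apply {f : E → F} (hf : ContDiff ℝ 2 f) (u v : E) :
    Continuous fun x => fderiv ℝ (fderiv ℝ f) x u v := by
  simpa only [fderiv_fderiv_apply hf] using
    continuous_fderiv_apply (contDiff_fderiv_apply hf v) u

variable [MeasurableSpace E] [BorelSpace E] {μ : Measure E} {f g : E → ℝ}

lemma integrable_fderiv_mul_fderiv [IsFiniteMeasureOnCompacts μ] (hf : ContDiff ℝ 1 f)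
    (hg : ContDiff ℝ 1 g) (hgc : HasCompactSupport g) (v : E) :
    Integrable (fun x => fderiv ℝ f x v * fderiv ℝ g x v) μ :=
  Continuous.integrable_of_hasCompactSupport
    ((continuous_fderiv_apply hf v).mul (continuous_fderiv_apply hg v))
    (hgc.fderiv_apply ℝ v).mul_left

lemma integral_mul_fderiv_eq_neg_fderiv_mul [FiniteDimensional ℝ E] [μ.IsAddHaarMeasure]
    (hf : ContDiff ℝ 1 f) (hg : ContDiff ℝ 1 g) (hgc : HasCompactSupport g) (v : E) :
    ∫ x, f x * fderiv ℝ g x v ∂μ = -∫ x, fderiv ℝ f x v * g x ∂μ :=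
  integral_mul_fderiv_eq_neg_fderiv_mul_of_integrable
    (((continuous_fderiv_apply hf v).mul hg.continuous).integrable_of_hasCompactSupport
      hgc.mul_left)
    ((hf.continuous.mul (continuous_fderiv_apply hg v)).integrable_of_hasCompactSupport
      (hgc.fderiv_apply ℝ v).mul_left)
    ((hf.continuous.mul hg.continuous).integrable_of_hasCompactSupport hgc.mul_left)
    (fun x _ => hf.differentiable one_ne_zero x) (fun x _ => hg.differentiable one_ne_zero x)

end Derivatives

section Laplacian

variable {E : Type*} [NormedAddCommGroup E] [InnerProductSpace ℝ E]

lemma hasFDerivAt_comp_norm_sq {φ : ℝ → ℝ} {φ' : ℝ} {z : E} (h : HasDerivAt φ φ' (‖z‖ ^ 2)) :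
    HasFDerivAt (fun y => φ (‖y‖ ^ 2)) ((2 * φ') • innerSL ℝ z) z := by
  refine (h.comp_hasFDerivAt z (hasStrictFDerivAt_norm_sq z).hasFDerivAt).congr_fderiv ?_
  ext v
  simp only [smul_apply, coe_innerSL_apply, nsmul_eq_mul, Nat.cast_ofNat, smul_eq_mul]
  ring

variable [FiniteDimensional ℝ E]

lemma norm_gradient (f : E → ℝ) (x : E) : ‖∇ f x‖ = ‖fderiv ℝ f x‖ := by
  simp [gradient]

lemma inner_gradient_gradient {ι : Type*} [Fintype ι] (b : OrthonormalBasis ι ℝ E)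
    (f g : E → ℝ) (x : E) :
    ⟪∇ f x, ∇ g x⟫_ℝ = ∑ i, fderiv ℝ f x (b i) * fderiv ℝ g x (b i) := by
  rw [← b.sum_inner_mul_inner]
  exact Finset.sum_congr rfl fun i _ => by
    rw [inner_gradient_left, inner_gradient_right, conj_trivial]

lemma laplacian_eq_sum_fderiv_fderiv {ι : Type*} [Fintype ι] (b : OrthonormalBasis ι ℝ E)
    (f : E → ℝ) (x : E) : Δ f x = ∑ i, fderiv ℝ (fderiv ℝ f) x (b i) (b i) := by
  simp [InnerProductSpace.laplacian_eq_iteratedFDeriv_orthonormalBasis f b,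
    iteratedFDeriv_two_apply]

lemma hasCompactSupport_laplacian {f : E → ℝ} (hf : HasCompactSupport f) :
    HasCompactSupport (Δ f) := by
  refine HasCompactSupport.intro hf fun x hx => ?_
  rw [(InnerProductSpace.laplacian_congr_nhds
    (notMem_tsupport_iff_eventuallyEq.1 hx)).self_of_nhds]
  exact congrFun InnerProductSpace.laplacian_const x

lemma laplacian_comp_smul_sub (f : E → ℝ) (c : ℝ) (x y : E) :
    Δ (fun y => f (c • (y - x))) y = c ^ 2 * Δ f (c • (y - x)) := by
  have hfirst : fderiv ℝ (fun y => f (c • (y - x))) = c • fun y => fderiv ℝ f (c • (y - x)) :=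
    funext (fderiv_comp_smul_sub f c x)
  have hsecond : fderiv ℝ (c • fun y => fderiv ℝ f (c • (y - x))) y
      = c • c • fderiv ℝ (fderiv ℝ f) (c • (y - x)) := by
    rw [fderiv_const_smul_field (𝕜 := ℝ) (f := fun y => fderiv ℝ f (c • (y - x))),
      Pi.smul_apply, fderiv_comp_smul_sub]
  simp only [laplacian_eq_sum_fderiv_fderiv (stdOrthonormalBasis ℝ E), hfirst, hsecond,
    smul_smul, ← sq, smul_apply, smul_eq_mul, Finset.mul_sum]

lemma laplacian_comp_norm_sq {φ φ' φ'' : ℝ → ℝ} (h : ∀ t, 0 ≤ t → HasDerivAt φ (φ' t) t)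
    (h' : ∀ t, 0 ≤ t → HasDerivAt φ' (φ'' t) t) (z : E) :
    Δ (fun y : E => φ (‖y‖ ^ 2)) z
      = 4 * ‖z‖ ^ 2 * φ'' (‖z‖ ^ 2) + 2 * finrank ℝ E * φ' (‖z‖ ^ 2) := by
  have hfirst : fderiv ℝ (fun y : E => φ (‖y‖ ^ 2)) = fun y => (2 * φ' (‖y‖ ^ 2)) • innerSL ℝ y :=
    funext fun y => (hasFDerivAt_comp_norm_sq (h _ (sq_nonneg _))).fderiv
  have hsecond (v : E) : fderiv ℝ (fun y : E => (2 * φ' (‖y‖ ^ 2)) • innerSL ℝ y) z v v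
      = 4 * φ'' (‖z‖ ^ 2) * ⟪z, v⟫_ℝ ^ 2 + 2 * φ' (‖z‖ ^ 2) * ‖v‖ ^ 2 := by
    rw [(((hasFDerivAt_comp_norm_sq (h' _ (sq_nonneg ‖z‖))).const_mul 2).fun_smul
      (innerSL ℝ : E →L[ℝ] E →L[ℝ] ℝ).hasFDerivAt).fderiv]
    have hz : innerSL ℝ z v = ⟪z, v⟫_ℝ := rfl
    have hv : innerSL ℝ v v = ‖v‖ ^ 2 := real_inner_self_eq_norm_sq v
    simp only [add_apply, smul_apply, ContinuousLinearMap.smulRight_apply, hz, smul_eq_mul, hv]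
    ring
  simp_rw [laplacian_eq_sum_fderiv_fderiv (stdOrthonormalBasis ℝ E), hfirst, hsecond]
  simp only [OrthonormalBasis.norm_eq_one, one_pow, mul_one, Finset.sum_add_distrib,
    ← Finset.mul_sum, OrthonormalBasis.sum_sq_inner_left, Finset.sum_const, Finset.card_univ,
    Fintype.card_fin, nsmul_eq_mul]
  ring

end Laplacian

section Green

variable {E : Type*} [NormedAddCommGroup E] [InnerProductSpace ℝ E]
  [FiniteDimensional ℝ E] [MeasurableSpace E] [BorelSpace E] {μ : Measure E} {f g : E → ℝ}

lemma integral_inner_gradient_eq_sum [IsFiniteMeasureOnCompacts μ] (hf : ContDiff ℝ 1 f)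
    (hg : ContDiff ℝ 1 g) (hgc : HasCompactSupport g) {ι : Type*} [Fintype ι]
    (b : OrthonormalBasis ι ℝ E) :
    ∫ x, ⟪∇ f x, ∇ g x⟫_ℝ ∂μ = ∑ i, ∫ x, fderiv ℝ f x (b i) * fderiv ℝ g x (b i) ∂μ := by
  simp_rw [inner_gradient_gradient b]
  exact integral_finsetSum _ fun i _ => integrable_fderiv_mul_fderiv hf hg hgc (b i)

variable [μ.IsAddHaarMeasure]

lemma integral_inner_gradient_eq_neg_integral_mul_laplacian (hf : ContDiff ℝ 1 f)
    (hg : ContDiff ℝ 2 g) (hgc : HasCompactSupport g) :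
    ∫ x, ⟪∇ f x, ∇ g x⟫_ℝ ∂μ = -∫ x, f x * Δ g x ∂μ := by
  have hparts (v : E) := integral_mul_fderiv_eq_neg_fderiv_mul (μ := μ) hf
    (contDiff_fderiv_apply hg v) (hgc.fderiv_apply ℝ v) v
  simp_rw [fderiv_fderiv_apply hg] at hparts
  rw [integral_inner_gradient_eq_sum hf (hg.of_le one_le_two) hgc (stdOrthonormalBasis ℝ E)]
  simp_rw [laplacian_eq_sum_fderiv_fderiv (stdOrthonormalBasis ℝ E), Finset.mul_sum]
  rw [integral_finsetSum _ fun i _ => ?_]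
  · simp [hparts]
  · refine Continuous.integrable_of_hasCompactSupport
      (hf.continuous.mul (continuous_fderiv_fderiv_apply hg _ _)) (HasCompactSupport.mul_left ?_)
    simpa only [fderiv_fderiv_apply hg] using (hgc.fderiv_apply ℝ _).fderiv_apply ℝ _

lemma integral_inner_gradient_eq_neg_integral_laplacian_mul (hf : ContDiff ℝ 2 f)
    (hg : ContDiff ℝ 1 g) (hgc : HasCompactSupport g) :
    ∫ x, ⟪∇ f x, ∇ g x⟫_ℝ ∂μ = -∫ x, Δ f x * g x ∂μ := by
  have hparts (v : E) := integral_mul_fderiv_eq_neg_fderiv_mul (μ := μ)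
    (contDiff_fderiv_apply hf v) hg hgc v
  simp_rw [fderiv_fderiv_apply hf] at hparts
  rw [integral_inner_gradient_eq_sum (hf.of_le one_le_two) hg hgc (stdOrthonormalBasis ℝ E)]
  simp_rw [laplacian_eq_sum_fderiv_fderiv (stdOrthonormalBasis ℝ E), Finset.sum_mul]
  rw [integral_finsetSum _ fun i _ => ?_]
  · simp [hparts]
  · exact Continuous.integrable_of_hasCompactSupport
      ((continuous_fderiv_fderiv_apply hf _ _).mul hg.continuous) hgc.mul_left

lemma integral_laplacian_mul_eq_integral_mul_laplacian (hf : ContDiff ℝ 2 f)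
    (hg : ContDiff ℝ 2 g) (hgc : HasCompactSupport g) :
    ∫ x, Δ f x * g x ∂μ = ∫ x, f x * Δ g x ∂μ := by
  rw [← neg_inj,
    ← integral_inner_gradient_eq_neg_integral_laplacian_mul hf (hg.of_le one_le_two) hgc,
    integral_inner_gradient_eq_neg_integral_mul_laplacian (hf.of_le one_le_two) hg hgc]

end Green

section RegularizedLog

variable {E : Type*} [NormedAddCommGroup E] [InnerProductSpace ℝ E]

lemma mul_inv_one_add {t : ℝ} (ht : 1 + t ≠ 0) : t * (1 + t)⁻¹ = 1 - (1 + t)⁻¹ := by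
  field_simp
  ring

lemma hasDerivAt_log_one_add {t : ℝ} (ht : 1 + t ≠ 0) :
    HasDerivAt (fun t => Real.log (1 + t)) (1 + t)⁻¹ t := by
  simpa using ((hasDerivAt_id t).const_add 1).log ht

lemma hasDerivAt_one_add_inv_pow {t : ℝ} (ht : 1 + t ≠ 0) (m : ℕ) :
    HasDerivAt (fun t => (1 + t)⁻¹ ^ m) (-(m * (1 + t)⁻¹ ^ (m + 1))) t := by
  refine ((((hasDerivAt_id t).const_add 1).fun_inv ht).fun_pow m).congr_deriv ?_
  rcases m with - | m
  · simp
  · simp only [Nat.add_sub_cancel, id_eq, div_eq_mul_inv, ← inv_pow]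
    ring

lemma contDiff_one_add_norm_sq_inv_pow {n : WithTop ℕ∞} (m : ℕ) :
    ContDiff ℝ n fun z : E => (1 + ‖z‖ ^ 2)⁻¹ ^ m :=
  ((contDiff_const.add (contDiff_norm_sq ℝ)).inv fun z =>
    (by positivity : 1 + ‖z‖ ^ 2 ≠ 0)).pow m

/-- The smooth regularization `½ log (1 + ‖z‖²)` of `log ‖z‖`. Its gradient is dominated by that of
`log ‖z‖`, and dilating it concentrates its bilaplacian at the origin. -/
def regLog (z : E) : ℝ := 2⁻¹ * Real.log (1 + ‖z‖ ^ 2)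

lemma contDiff_regLog {n : WithTop ℕ∞} : ContDiff ℝ n (regLog : E → ℝ) :=
  contDiff_const.mul ((contDiff_const.add (contDiff_norm_sq ℝ)).log fun z =>
    (by positivity : 1 + ‖z‖ ^ 2 ≠ 0))

lemma fderiv_regLog (z : E) : fderiv ℝ regLog z = (1 + ‖z‖ ^ 2)⁻¹ • innerSL ℝ z := by
  have h := hasFDerivAt_comp_norm_sq (z := z)
    ((hasDerivAt_log_one_add (by positivity)).const_mul 2⁻¹)
  rw [mul_inv_cancel_left₀ two_ne_zero] at h
  exact h.fderiv

lemma fderiv_log_norm {z : E} (hz : z ≠ 0) :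
    fderiv ℝ (fun y : E => Real.log ‖y‖) z = (‖z‖ ^ 2)⁻¹ • innerSL ℝ z := by
  have hz' : ‖z‖ ^ 2 ≠ 0 := by positivity
  have h := hasFDerivAt_comp_norm_sq ((Real.hasDerivAt_log hz').const_mul 2⁻¹)
  simp only [Real.log_pow, Nat.cast_ofNat, ne_eq, two_ne_zero, not_false_eq_true,
    inv_mul_cancel_left₀, mul_inv_cancel_left₀] at h
  exact h.fderiv

lemma norm_fderiv_log_norm {z : E} (hz : z ≠ 0) :
    ‖fderiv ℝ (fun y : E => Real.log ‖y‖) z‖ = ‖z‖⁻¹ := by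
  rw [fderiv_log_norm hz, norm_smul, innerSL_apply_norm, norm_inv, norm_pow, norm_norm]
  field_simp

lemma norm_fderiv_regLog_comp_smul_sub_le (c : ℝ) (x y : E) :
    ‖fderiv ℝ (fun y => regLog (c • (y - x))) y‖
      ≤ ‖fderiv ℝ (fun z : E => Real.log ‖z‖) (y - x)‖ := by
  rw [fderiv_comp_smul_sub, fderiv_regLog]
  rcases eq_or_ne (c • (y - x)) 0 with h | h
  · simp [h]
  · have hc : c ≠ 0 := left_ne_zero_of_smul h
    have hyx : y - x ≠ 0 := right_ne_zero_of_smul h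
    have hs : 0 ≤ (1 + ‖c • (y - x)‖ ^ 2)⁻¹ := by positivity
    rw [norm_fderiv_log_norm hyx, norm_smul, norm_smul, innerSL_apply_norm, norm_of_nonneg hs,
      norm_smul]
    field_simp
    linarith

variable [FiniteDimensional ℝ E]

lemma laplacian_one_add_norm_sq_inv_pow (m : ℕ) (z : E) :
    Δ (fun y : E => ((1 + ‖y‖ ^ 2)⁻¹ ^ m : ℝ)) z
      = 2 * m * (2 * (m + 1) - finrank ℝ E) * (1 + ‖z‖ ^ 2)⁻¹ ^ (m + 1)
        - 4 * m * (m + 1) * (1 + ‖z‖ ^ 2)⁻¹ ^ (m + 2) := by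
  rw [laplacian_comp_norm_sq (fun t ht => hasDerivAt_one_add_inv_pow (by positivity) m)
    (fun t ht => ((hasDerivAt_one_add_inv_pow (by positivity) (m + 1)).const_mul _).fun_neg) z]
  have hz : 1 + ‖z‖ ^ 2 ≠ 0 := by positivity
  push_cast
  linear_combination 4 * m * (m + 1) * (1 + ‖z‖ ^ 2)⁻¹ ^ (m + 1) * mul_inv_one_add hz

lemma laplacian_regLog (z : E) :
    Δ (regLog : E → ℝ) z
      = (finrank ℝ E - 2) * (1 + ‖z‖ ^ 2)⁻¹ ^ 1 + 2 * (1 + ‖z‖ ^ 2)⁻¹ ^ 2 := by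
  refine (laplacian_comp_norm_sq (φ' := fun t => 2⁻¹ * (1 + t)⁻¹ ^ 1)
    (fun t ht => ((hasDerivAt_log_one_add (by positivity)).const_mul 2⁻¹).congr_deriv (by ring))
    (fun t ht => (hasDerivAt_one_add_inv_pow (by positivity) 1).const_mul 2⁻¹) z).trans ?_
  have hz : 1 + ‖z‖ ^ 2 ≠ 0 := by positivity
  push_cast
  linear_combination -2 * (1 + ‖z‖ ^ 2)⁻¹ * mul_inv_one_add hz

lemma contDiff_laplacian_regLog {n : WithTop ℕ∞} : ContDiff ℝ n (Δ (regLog : E → ℝ)) := by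
  rw [funext laplacian_regLog]
  exact (contDiff_const.mul (contDiff_one_add_norm_sq_inv_pow 1)).add
    (contDiff_const.mul (contDiff_one_add_norm_sq_inv_pow 2))

lemma laplacian_laplacian_regLog (z : E) :
    Δ (Δ (regLog : E → ℝ)) z
      = -(2 * (finrank ℝ E - 2) * (finrank ℝ E - 4) * (1 + ‖z‖ ^ 2)⁻¹ ^ 2
        + 16 * (finrank ℝ E - 4) * (1 + ‖z‖ ^ 2)⁻¹ ^ 3 + 48 * (1 + ‖z‖ ^ 2)⁻¹ ^ 4) := by
  have hsmul (c : ℝ) (m : ℕ) : ContDiffAt ℝ 2 (c • fun y : E => (1 + ‖y‖ ^ 2)⁻¹ ^ m) z :=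
    ((contDiff_one_add_norm_sq_inv_pow m).const_smul c).contDiffAt
  have hΔ : Δ (regLog : E → ℝ) = ((finrank ℝ E - 2 : ℝ) • fun y : E => (1 + ‖y‖ ^ 2)⁻¹ ^ 1)
      + (2 : ℝ) • fun y : E => (1 + ‖y‖ ^ 2)⁻¹ ^ 2 := funext laplacian_regLog
  rw [hΔ, (hsmul _ _).laplacian_add (hsmul _ _),
    InnerProductSpace.laplacian_smul _ (contDiff_one_add_norm_sq_inv_pow 1).contDiffAt,
    InnerProductSpace.laplacian_smul _ (contDiff_one_add_norm_sq_inv_pow 2).contDiffAt,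
    laplacian_one_add_norm_sq_inv_pow, laplacian_one_add_norm_sq_inv_pow]
  push_cast
  simp only [smul_eq_mul]
  ring

end RegularizedLog

section PeakFunction

variable {E : Type*} [NormedAddCommGroup E] [NormedSpace ℝ E] {m : ℕ}

lemma tendsto_norm_pow_mul_one_add_norm_sq_inv_pow (hm : finrank ℝ E < 2 * m) :
    Tendsto (fun z : E => ‖z‖ ^ finrank ℝ E * (1 + ‖z‖ ^ 2)⁻¹ ^ m) (Bornology.cobounded E)
      (𝓝 0) := by
  have hone := tendsto_norm_cobounded_atTop.eventually_ge_atTop (α := E) 1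
  refine squeeze_zero' (Eventually.of_forall fun z => by positivity) ?_
    (tendsto_inv_atTop_zero.comp tendsto_norm_cobounded_atTop)
  filter_upwards [hone] with z hz
  have hz₀ : 0 < ‖z‖ := one_pos.trans_le hz
  calc ‖z‖ ^ finrank ℝ E * (1 + ‖z‖ ^ 2)⁻¹ ^ m
      ≤ ‖z‖ ^ (2 * m - 1) * (‖z‖ ^ 2)⁻¹ ^ m := by
        gcongr
        · omega
        · simp
    _ = ‖z‖⁻¹ := by
        obtain ⟨k, rfl⟩ : ∃ k, m = k + 1 := ⟨m - 1, by omega⟩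
        rw [show 2 * (k + 1) - 1 = 2 * k + 1 by omega, inv_pow, ← pow_mul]
        field_simp [hz₀.ne']
        ring

variable [FiniteDimensional ℝ E] [MeasurableSpace E] [BorelSpace E] {μ : Measure E}
  [μ.IsAddHaarMeasure]

lemma integrable_one_add_norm_sq_inv_pow (hm : finrank ℝ E < 2 * m) :
    Integrable (fun z : E => (1 + ‖z‖ ^ 2)⁻¹ ^ m) μ := by
  have hr : (finrank ℝ E : ℝ) < 2 * m := mod_cast hm
  refine (integrable_rpow_neg_one_add_norm_sq hr).congr (Eventually.of_forall fun z => ?_)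
  have hz : 0 ≤ 1 + ‖z‖ ^ 2 := by positivity
  simp only
  rw [show -(2 * m : ℝ) / 2 = -m by ring, Real.rpow_neg hz, Real.rpow_natCast, inv_pow]

lemma integral_one_add_norm_sq_inv_pow_pos (hm : finrank ℝ E < 2 * m) :
    0 < ∫ z : E, (1 + ‖z‖ ^ 2)⁻¹ ^ m ∂μ := by
  have hpos (z : E) : 0 < (1 + ‖z‖ ^ 2)⁻¹ ^ m := by positivity
  rw [integral_pos_iff_support_of_nonneg (fun z => (hpos z).le)
    (integrable_one_add_norm_sq_inv_pow hm), Function.support_eq_univ fun z => (hpos z).ne']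
  exact NeZero.pos _

lemma tendsto_integral_one_add_norm_sq_inv_pow_mul (hm : finrank ℝ E < 2 * m) {g : E → ℝ}
    (hg : Integrable g μ) {x : E} (hgx : ContinuousAt g x) :
    Tendsto (fun c : ℝ => ∫ y, c ^ finrank ℝ E * (1 + ‖c • (y - x)‖ ^ 2)⁻¹ ^ m * g y ∂μ) atTop
      (𝓝 ((∫ z : E, (1 + ‖z‖ ^ 2)⁻¹ ^ m ∂μ) * g x)) := by
  set I := ∫ z : E, (1 + ‖z‖ ^ 2)⁻¹ ^ m ∂μ
  have hI : 0 < I := integral_one_add_norm_sq_inv_pow_pos hm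
  have hdecay := (tendsto_norm_pow_mul_one_add_norm_sq_inv_pow hm).const_mul I⁻¹
  have hpeak := (tendsto_integral_comp_smul_smul_of_integrable'
    (φ := fun z => I⁻¹ * (1 + ‖z‖ ^ 2)⁻¹ ^ m) (fun z => by positivity)
    (by rw [integral_const_mul, inv_mul_cancel₀ hI.ne'])
    (by simpa only [mul_left_comm, mul_zero] using hdecay) hg hgx).const_mul I
  refine hpeak.congr fun c => ?_
  rw [← integral_const_mul]
  refine integral_congr_ae (Eventually.of_forall fun y => ?_)
  simp only [smul_eq_mul, norm_smul, norm_sub_rev x y]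
  field_simp

end PeakFunction

section Representation

variable {E : Type*} [NormedAddCommGroup E] [InnerProductSpace ℝ E] [FiniteDimensional ℝ E]

lemma laplacian_laplacian_regLog_comp_smul_sub (hE : finrank ℝ E = 4) (c : ℝ) (x y : E) :
    Δ (Δ fun y => regLog (c • (y - x))) y
      = -(48 * (c ^ 4 * (1 + ‖c • (y - x)‖ ^ 2)⁻¹ ^ 4)) := by
  have hΔ : (Δ fun y => regLog (c • (y - x)))
      = c ^ 2 • fun y => Δ (regLog : E → ℝ) (c • (y - x)) :=
    funext (laplacian_comp_smul_sub regLog c x)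
  have hsmooth : ContDiff ℝ 2 fun y => Δ (regLog : E → ℝ) (c • (y - x)) :=
    contDiff_laplacian_regLog.comp (contDiff_smul_sub c x)
  rw [hΔ, InnerProductSpace.laplacian_smul _ hsmooth.contDiffAt,
    laplacian_comp_smul_sub (Δ regLog), laplacian_laplacian_regLog, hE, smul_eq_mul]
  push_cast
  ring

variable [MeasurableSpace E] [BorelSpace E]

/-- The mass of `-Δ² regLog` in dimension four. Equivalently, `Δ² log ‖·‖` is the point mass
`-bilaplacianMass` at the origin, so this is the normalizing constant of the fundamental solution
(`8π²` for Lebesgue measure). -/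
def bilaplacianMass (μ : Measure E) : ℝ := 48 * ∫ z, (1 + ‖z‖ ^ 2)⁻¹ ^ 4 ∂μ

variable {μ : Measure E} [μ.IsAddHaarMeasure] {w : E → ℝ}

lemma bilaplacianMass_pos (hE : finrank ℝ E = 4) : 0 < bilaplacianMass μ :=
  mul_pos (by norm_num) (integral_one_add_norm_sq_inv_pow_pos (by omega))

lemma integral_inner_gradient_regLog_gradient_laplacian (hE : finrank ℝ E = 4)
    (hw : ContDiff ℝ 2 w) (hΔw : ContDiff ℝ 1 (Δ w)) (hwc : HasCompactSupport w) (c : ℝ) (x : E) :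
    ∫ y, ⟪∇ (fun y => regLog (c • (y - x))) y, ∇ (Δ w) y⟫_ℝ ∂μ
      = 48 * ∫ y, c ^ 4 * (1 + ‖c • (y - x)‖ ^ 2)⁻¹ ^ 4 * w y ∂μ := by
  have hsmooth : ContDiff ℝ 2 fun y => regLog (c • (y - x)) :=
    contDiff_regLog.comp (contDiff_smul_sub c x)
  have hΔsmooth : ContDiff ℝ 2 (Δ fun y => regLog (c • (y - x))) := by
    rw [funext (laplacian_comp_smul_sub regLog c x)]
    exact contDiff_const.mul (contDiff_laplacian_regLog.comp (contDiff_smul_sub c x))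
  rw [integral_inner_gradient_eq_neg_integral_laplacian_mul hsmooth hΔw
      (hasCompactSupport_laplacian hwc),
    ← integral_laplacian_mul_eq_integral_mul_laplacian hΔsmooth hw hwc, ← integral_neg,
    ← integral_const_mul]
  simp_rw [laplacian_laplacian_regLog_comp_smul_sub hE, neg_mul, neg_neg, mul_assoc]

lemma ofReal_bilaplacianMass_mul_abs_le_lintegral (hE : finrank ℝ E = 4) (hw : ContDiff ℝ 2 w)
    (hΔw : ContDiff ℝ 1 (Δ w)) (hwc : HasCompactSupport w) (x : E) :
    ENNReal.ofReal (bilaplacianMass μ * |w x|)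
      ≤ ∫⁻ y, ‖fderiv ℝ (fun z : E => Real.log ‖z‖) (y - x)‖ₑ * ‖fderiv ℝ (Δ w) y‖ₑ ∂μ := by
  have hpeak := ((tendsto_integral_one_add_norm_sq_inv_pow_mul (μ := μ) (m := 4) (by omega)
    (hw.continuous.integrable_of_hasCompactSupport hwc)
    (hw.continuous.continuousAt (x := x))).const_mul 48).abs
  rw [hE, ← mul_assoc, abs_mul, ← bilaplacianMass, abs_of_pos (bilaplacianMass_pos hE)] at hpeak
  refine le_of_tendsto (ENNReal.tendsto_ofReal hpeak) (Eventually.of_forall fun c => ?_)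
  rw [← integral_inner_gradient_regLog_gradient_laplacian hE hw hΔw hwc, ← norm_eq_abs,
    ofReal_norm]
  refine (enorm_integral_le_lintegral_enorm _).trans (lintegral_mono fun y => ?_)
  rw [← ofReal_norm, ← ofReal_norm, ← ofReal_norm, ← ofReal_mul (norm_nonneg _)]
  refine ofReal_le_ofReal ?_
  calc ‖⟪∇ (fun y => regLog (c • (y - x))) y, ∇ (Δ w) y⟫_ℝ‖
      ≤ ‖fderiv ℝ (fun y => regLog (c • (y - x))) y‖ * ‖fderiv ℝ (Δ w) y‖ := by
        rw [← norm_gradient, ← norm_gradient]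
        exact norm_inner_le_norm _ _
    _ ≤ ‖fderiv ℝ (fun z : E => Real.log ‖z‖) (y - x)‖ * ‖fderiv ℝ (Δ w) y‖ := by
        gcongr
        exact norm_fderiv_regLog_comp_smul_sub_le c x y

end Representation

section LayerCake

variable {α : Type*} [MeasurableSpace α] {μ : Measure α}

lemma lintegral_mul_ofReal_eq_lintegral_setLIntegral [SFinite μ] {f : α → ℝ≥0∞} {g : α → ℝ}
    (hf : AEMeasurable f μ) (hg : AEMeasurable g μ) (hg0 : ∀ x, 0 ≤ g x) :
    ∫⁻ x, f x * ENNReal.ofReal (g x) ∂μ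
      = ∫⁻ l in Set.Ioi (0 : ℝ), ∫⁻ x in {x | l ≤ g x}, f x ∂μ := by
  have hdensity := lintegral_withDensity_eq_lintegral_mul₀ hf hg.ennreal_ofReal
  simp only [Pi.mul_apply] at hdensity
  rw [← hdensity, lintegral_eq_lintegral_meas_le _ (Eventually.of_forall hg0)
    (hg.mono_ac (withDensity_absolutelyContinuous _ _))]
  simp_rw [withDensity_apply']

lemma setLIntegral_ofReal_le_mul_add {f : α → ℝ} (hf : AEMeasurable f μ) (hf0 : ∀ x, 0 ≤ f x)
    (A : Set α) {T : ℝ} (hT : 0 ≤ T) :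
    ∫⁻ x in A, ENNReal.ofReal (f x) ∂μ
      ≤ ENNReal.ofReal T * μ A + ∫⁻ l in Set.Ioi T, μ {x | l < f x} := by
  rw [lintegral_eq_lintegral_meas_lt _ (Eventually.of_forall hf0) hf.restrict,
    ← Set.Ioc_union_Ioi_eq_Ioi hT]
  refine (lintegral_union_le _ _ _).trans (add_le_add ?_ ?_)
  · calc ∫⁻ l in Set.Ioc 0 T, μ.restrict A {x | l < f x}
        ≤ ∫⁻ _ in Set.Ioc 0 T, μ A :=
          lintegral_mono fun l => (measure_mono (Set.subset_univ _)).trans_eq (by simp)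
      _ = ENNReal.ofReal T * μ A := by simp [mul_comm]
  · exact lintegral_mono fun l => Measure.restrict_apply_le _ _

end LayerCake

section WeakNorm

variable {p q : ℝ} {f : E4 → ℝ}

lemma volume_lt_abs_le_wnorm_div_rpow (hp : 0 < p) (f : E4 → ℝ) {l : ℝ} (hl : 0 < l) :
    volume {x | l < |f x|} ≤ (wnorm p f / ENNReal.ofReal l) ^ p := by
  rw [← ENNReal.rpow_inv_le_iff hp, ENNReal.le_div_iff_mul_le (by simp [hl]) (by simp),
    ← one_div, mul_comm]
  exact le_iSup₂_of_le l hl le_rfl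

lemma wnorm_comp_sub_right (p : ℝ) (f : E4 → ℝ) (x : E4) :
    wnorm p (fun y => f (y - x)) = wnorm p f := by
  refine biSup_congr fun l _ => ?_
  congr 2
  simp_rw [sub_eq_add_neg]
  exact measure_preimage_add_right volume (-x) {y | l < |f y|}

lemma lintegral_volume_lt_abs_le (hp : 1 < p) (hf : wnorm p f ≠ ⊤) {T : ℝ} (hT : 0 < T) :
    ∫⁻ l in Set.Ioi T, volume {x | l < |f x|}
      ≤ ENNReal.ofReal ((wnorm p f).toReal ^ p * (T ^ (1 - p) / (p - 1))) := by
  set N := (wnorm p f).toReal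
  have hp0 : 0 < p := one_pos.trans hp
  have hdecay : ∀ l ∈ Set.Ioi T,
      volume {x | l < |f x|} ≤ ENNReal.ofReal (N ^ p * l ^ (-p)) := fun l hl => by
    have hl0 : 0 < l := hT.trans hl
    refine (volume_lt_abs_le_wnorm_div_rpow hp0 f hl0).trans_eq ?_
    rw [← ofReal_toReal hf, ← ofReal_div_of_pos hl0,
      ENNReal.ofReal_rpow_of_nonneg (by positivity) hp0.le,
      Real.div_rpow toReal_nonneg hl0.le, Real.rpow_neg hl0.le, div_eq_mul_inv]
  refine (setLIntegral_mono' measurableSet_Ioi hdecay).trans_eq ?_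
  rw [← ofReal_integral_eq_lintegral_ofReal
      ((integrableOn_Ioi_rpow_of_lt (by linarith) hT).const_mul _)
      ((ae_restrict_mem measurableSet_Ioi).mono fun l hl => ?_),
    integral_const_mul, integral_Ioi_rpow_of_lt (by linarith) hT]
  · congr 2
    rw [neg_add_eq_sub, ← neg_sub p 1, div_neg, neg_div, neg_neg]
  · have hl0 : 0 < l := hT.trans hl
    simp only [Pi.zero_apply]
    positivity

lemma mul_rpow_add_rpow_mul_eq (hpq : p.HolderConjugate q) {N a : ℝ} (hN : 0 < N) (ha : 0 < a) :
    N * a ^ (-p⁻¹) * a + N ^ p * ((N * a ^ (-p⁻¹)) ^ (1 - p) / (p - 1)) = q * N * a ^ q⁻¹ := by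
  have hp : p - 1 ≠ 0 := hpq.sub_one_ne_zero
  have hq : q = p / (p - 1) := hpq.conjugate_eq
  have hfirst : a ^ (-p⁻¹) * a = a ^ q⁻¹ := by
    rw [← Real.rpow_add_one ha.ne', ← hpq.one_sub_inv, neg_add_eq_sub]
  have hsecond : (a ^ (-p⁻¹)) ^ (1 - p) = a ^ q⁻¹ := by
    rw [← Real.rpow_mul ha.le, ← hpq.one_sub_inv]
    congr 1
    field_simp [hpq.ne_zero]
    ring
  have hN_pow : N ^ p * N ^ (1 - p) = N := by
    rw [← Real.rpow_add hN, add_sub_cancel, Real.rpow_one]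
  calc N * a ^ (-p⁻¹) * a + N ^ p * ((N * a ^ (-p⁻¹)) ^ (1 - p) / (p - 1))
      = N * (a ^ (-p⁻¹) * a) + N ^ p * N ^ (1 - p) * (a ^ (-p⁻¹)) ^ (1 - p) / (p - 1) := by
        rw [Real.mul_rpow hN.le (by positivity)]
        ring
    _ = (1 + (p - 1)⁻¹) * N * a ^ q⁻¹ := by
        rw [hfirst, hsecond, hN_pow]
        ring
    _ = q * N * a ^ q⁻¹ := by
        rw [hq]
        congr 2
        field_simp
        ring

lemma ae_eq_zero_of_wnorm_eq_zero (hp : 0 < p) (hf : wnorm p f = 0) : f =ᵐ[volume] 0 := by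
  have hlevel (n : ℕ) : volume {x | 1 / ((n : ℝ) + 1) < |f x|} = 0 := by
    have hle := volume_lt_abs_le_wnorm_div_rpow hp f (Nat.one_div_pos_of_nat (α := ℝ) (n := n))
    rwa [hf, ENNReal.zero_div, ENNReal.zero_rpow_of_pos hp, nonpos_iff_eq_zero] at hle
  refine measure_mono_null (fun x hx => ?_) (measure_iUnion_null hlevel)
  exact Set.mem_iUnion.2 (exists_nat_one_div_lt (abs_pos.2 hx))

lemma setLIntegral_enorm_le_wnorm_mul (hpq : p.HolderConjugate q) (hf : Measurable f)
    {A : Set E4} (hA : volume A ≠ ⊤) :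
    ∫⁻ x in A, ‖f x‖ₑ ≤ wnorm p f * (ENNReal.ofReal q * volume A ^ q⁻¹) := by
  rcases eq_or_ne (volume A) 0 with hA0 | hA0
  · rw [setLIntegral_measure_zero _ _ hA0]
    exact zero_le
  rcases eq_or_ne (wnorm p f) 0 with hN0 | hN0
  · have hzero : ∫⁻ x, ‖f x‖ₑ = 0 :=
      (lintegral_eq_zero_iff hf.enorm).2
        ((ae_eq_zero_of_wnorm_eq_zero hpq.pos hN0).mono fun x hx => by simp [hx])
    exact ((setLIntegral_le_lintegral _ _).trans_eq hzero).trans zero_le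
  rcases eq_or_ne (wnorm p f) ⊤ with hN | hN
  · rw [hN, top_mul]
    · exact le_top
    · simp [hpq.symm.pos, hA0, hA]
  set N := (wnorm p f).toReal with hN_def
  set a := (volume A).toReal with ha_def
  have hNpos : 0 < N := toReal_pos hN0 hN
  have hapos : 0 < a := toReal_pos hA0 hA
  -- This threshold minimizes the bound below over all `T > 0`.
  set T := N * a ^ (-p⁻¹)
  have hTpos : 0 < T := by positivity
  calc ∫⁻ x in A, ‖f x‖ₑ = ∫⁻ x in A, ENNReal.ofReal |f x| := by
        simp_rw [Real.enorm_eq_ofReal_abs]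
    _ ≤ ENNReal.ofReal T * volume A + ∫⁻ l in Set.Ioi T, volume {x | l < |f x|} :=
        setLIntegral_ofReal_le_mul_add hf.abs.aemeasurable (fun _ => abs_nonneg _) A hTpos.le
    _ ≤ ENNReal.ofReal (T * a) + ENNReal.ofReal (N ^ p * (T ^ (1 - p) / (p - 1))) := by
        rw [ofReal_mul hTpos.le, ha_def, ofReal_toReal hA]
        gcongr
        exact lintegral_volume_lt_abs_le hpq.lt hN hTpos
    _ = ENNReal.ofReal (q * N * a ^ q⁻¹) := by
        have := hpq.sub_one_pos
        rw [← ofReal_add (by positivity) (by positivity), mul_rpow_add_rpow_mul_eq hpq hNpos hapos]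
    _ = wnorm p f * (ENNReal.ofReal q * volume A ^ q⁻¹) := by
        have := hpq.symm.pos
        rw [mul_right_comm, mul_comm, ofReal_mul hNpos.le, ofReal_mul this.le, hN_def,
          ofReal_toReal hN, ← ofReal_rpow_of_pos hapos, ha_def, ofReal_toReal hA]

end WeakNorm

section Rearrangement

variable {q M : ℝ} {g : E4 → ℝ}

lemma bddBelow_setOf_volume_lt_abs_le (g : E4 → ℝ) (t : ℝ) :
    BddBelow {s | 0 ≤ s ∧ (volume {x | s < |g x|}).toReal ≤ t} :=
  ⟨0, fun _ hs => hs.1⟩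

lemma mem_setOf_volume_lt_abs_le (hM : ∀ x, |g x| ≤ M) {t : ℝ} (ht : 0 ≤ t) :
    M ∈ {s | 0 ≤ s ∧ (volume {x | s < |g x|}).toReal ≤ t} := by
  refine ⟨(abs_nonneg _).trans (hM 0), ?_⟩
  simpa [(hM _).not_gt] using ht

lemma rearr_nonneg (g : E4 → ℝ) (t : ℝ) : 0 ≤ rearr g t :=
  Real.sInf_nonneg fun _ hs => hs.1

lemma rearr_le (hM : ∀ x, |g x| ≤ M) {t : ℝ} (ht : 0 ≤ t) : rearr g t ≤ M :=
  csInf_le (bddBelow_setOf_volume_lt_abs_le g t) (mem_setOf_volume_lt_abs_le hM ht)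

lemma rearr_eq_zero {t : ℝ} (ht : (volume (Function.support g)).toReal ≤ t) : rearr g t = 0 := by
  refine le_antisymm (csInf_le (bddBelow_setOf_volume_lt_abs_le g t) ⟨le_rfl, ?_⟩)
    (rearr_nonneg g t)
  simpa only [abs_pos, Function.support] using ht

lemma antitoneOn_rearr (hM : ∀ x, |g x| ≤ M) : AntitoneOn (rearr g) (Set.Ici 0) :=
  fun _ hs t _ hst => csInf_le_csInf (bddBelow_setOf_volume_lt_abs_le g t)
    ⟨M, mem_setOf_volume_lt_abs_le hM hs⟩ fun _ hr => ⟨hr.1, hr.2.trans hst⟩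

lemma volume_le_abs_ne_top (hg : volume (Function.support g) ≠ ⊤) {l : ℝ} (hl : 0 < l) :
    volume {x | l ≤ |g x|} ≠ ⊤ :=
  ne_top_of_le_ne_top hg (measure_mono fun _ hx => abs_pos.1 (hl.trans_le hx))

lemma le_rearr (hM : ∀ x, |g x| ≤ M) (hg : volume (Function.support g) ≠ ⊤) {t l : ℝ}
    (ht : 0 ≤ t) (hl : t < (volume {x | l ≤ |g x|}).toReal) : l ≤ rearr g t := by
  refine le_csInf ⟨M, mem_setOf_volume_lt_abs_le hM ht⟩ fun s ⟨hs0, hs⟩ => ?_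
  by_contra! hsl
  have hfin : volume {x | s < |g x|} ≠ ⊤ :=
    ne_top_of_le_ne_top hg (measure_mono fun _ hx => abs_pos.1 (hs0.trans_lt hx))
  have hmono : (volume {x | l ≤ |g x|}).toReal ≤ (volume {x | s < |g x|}).toReal :=
    toReal_mono hfin (measure_mono fun _ hx => hsl.trans_le hx)
  linarith

lemma aemeasurable_rearr (hM : ∀ x, |g x| ≤ M) :
    AEMeasurable (rearr g) (volume.restrict (Set.Ioi 0)) :=
  aemeasurable_restrict_of_antitoneOn measurableSet_Ioi
    ((antitoneOn_rearr hM).mono Set.Ioi_subset_Ici_self)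

lemma integrableOn_rearr (hM : ∀ x, |g x| ≤ M) : IntegrableOn (rearr g) (Set.Ioi 0) := by
  set V := (volume (Function.support g)).toReal
  have hbound : Integrable ((Set.Ioo 0 V).indicator fun _ => M) :=
    (integrable_indicator_iff measurableSet_Ioo).2 (integrableOn_const (by simp))
  refine hbound.integrableOn.mono' (aemeasurable_rearr hM).aestronglyMeasurable ?_
  refine (ae_restrict_mem measurableSet_Ioi).mono fun t ht => ?_
  rw [Real.norm_of_nonneg (rearr_nonneg g t)]
  by_cases htV : t < V
  · rw [Set.indicator_of_mem (show t ∈ Set.Ioo 0 V from ⟨ht, htV⟩)]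
    exact rearr_le hM (le_of_lt ht)
  · rw [rearr_eq_zero (not_lt.1 htV)]
    exact Set.indicator_nonneg (fun x _ => (abs_nonneg (g 0)).trans (hM 0)) t

/-- The maximal rearrangement `f**(t) = t⁻¹ ∫₀ᵗ f*`, whose weighted integral is `Lp1norm`. -/
def maxRearr (f : E4 → ℝ) (t : ℝ) : ℝ := (1 / t) * ∫ s in Set.Ioo 0 t, rearr f s

lemma integral_Ioo_rearr_nonneg (g : E4 → ℝ) (t : ℝ) : 0 ≤ ∫ s in Set.Ioo 0 t, rearr g s :=
  integral_nonneg fun s => rearr_nonneg g s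

lemma maxRearr_nonneg (g : E4 → ℝ) {t : ℝ} (ht : 0 ≤ t) : 0 ≤ maxRearr g t :=
  mul_nonneg (one_div_nonneg.2 ht) (integral_Ioo_rearr_nonneg g t)

lemma measurable_maxRearr (hM : ∀ x, |g x| ≤ M) : Measurable (maxRearr g) := by
  have hmono : Monotone fun t => ∫ s in Set.Ioo 0 t, rearr g s := fun a b hab =>
    setIntegral_mono_set ((integrableOn_rearr hM).mono_set Set.Ioo_subset_Ioi_self)
      (Eventually.of_forall (rearr_nonneg g)) (Set.Ioo_subset_Ioo_right hab).eventuallyLE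
  exact (measurable_const.div measurable_id).mul hmono.measurable

lemma rearr_le_maxRearr (hM : ∀ x, |g x| ≤ M) {t : ℝ} (ht : 0 < t) : rearr g t ≤ maxRearr g t := by
  have hle : ∫ _ in Set.Ioo 0 t, rearr g t ≤ ∫ s in Set.Ioo 0 t, rearr g s :=
    setIntegral_mono_on (integrableOn_const (by simp))
      ((integrableOn_rearr hM).mono_set Set.Ioo_subset_Ioi_self) measurableSet_Ioo
      fun s hs => antitoneOn_rearr hM hs.1.le ht.le hs.2.le
  rw [maxRearr, one_div, le_inv_mul_iff₀ ht]
  simpa [ht.le] using hle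

lemma maxRearr_le (hM : ∀ x, |g x| ≤ M) {t : ℝ} (ht : 0 < t) : maxRearr g t ≤ M := by
  have hle : ∫ s in Set.Ioo 0 t, rearr g s ≤ ∫ _ in Set.Ioo 0 t, M :=
    setIntegral_mono_on ((integrableOn_rearr hM).mono_set Set.Ioo_subset_Ioi_self)
      (integrableOn_const (by simp)) measurableSet_Ioo fun s hs => rearr_le hM hs.1.le
  rw [maxRearr, one_div, inv_mul_le_iff₀ ht]
  simpa [ht.le] using hle

lemma maxRearr_le_integral_div (hM : ∀ x, |g x| ≤ M) {t : ℝ} (ht : 0 < t) :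
    maxRearr g t ≤ (∫ s in Set.Ioi 0, rearr g s) / t := by
  rw [maxRearr, one_div_mul_eq_div]
  gcongr ?_ / t
  exact setIntegral_mono_set (integrableOn_rearr hM) (Eventually.of_forall (rearr_nonneg g))
    Set.Ioo_subset_Ioi_self.eventuallyLE

end Rearrangement

section LorentzNorm

variable {p q M : ℝ} {f g : E4 → ℝ}

lemma Lp1norm_eq_integral_maxRearr (q : ℝ) (g : E4 → ℝ) :
    Lp1norm q g = ∫ t in Set.Ioi (0 : ℝ), t ^ (1 / q - 1) * maxRearr g t :=
  rfl

lemma rpow_mul_maxRearr_nonneg (q : ℝ) (g : E4 → ℝ) {t : ℝ} (ht : 0 < t) :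
    0 ≤ t ^ (1 / q - 1) * maxRearr g t :=
  mul_nonneg (Real.rpow_nonneg ht.le _) (maxRearr_nonneg g ht.le)

lemma Lp1norm_nonneg (q : ℝ) (g : E4 → ℝ) : 0 ≤ Lp1norm q g :=
  setIntegral_nonneg measurableSet_Ioi fun _ ht => rpow_mul_maxRearr_nonneg q g ht

lemma integrableOn_rpow_mul_maxRearr (hq : 1 < q) (hM : ∀ x, |g x| ≤ M) :
    IntegrableOn (fun t => t ^ (1 / q - 1) * maxRearr g t) (Set.Ioi 0) := by
  have hq0 : 0 < 1 / q := by positivity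
  have hq1 : 1 / q < 1 := (div_lt_one (by positivity)).2 hq
  have hmeas : Measurable fun t => t ^ (1 / q - 1) * maxRearr g t :=
    (measurable_id.pow_const _).mul (measurable_maxRearr hM)
  rw [← Set.Ioc_union_Ioi_eq_Ioi zero_le_one]
  refine IntegrableOn.union ?_ ?_
  · have hint : IntegrableOn (fun t : ℝ => t ^ (1 / q - 1)) (Set.Ioc 0 1) :=
      (intervalIntegrable_iff_integrableOn_Ioc_of_le zero_le_one).1
        (intervalIntegral.intervalIntegrable_rpow' (by linarith))
    refine (hint.mul_const M).mono' hmeas.aestronglyMeasurable ?_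
    refine (ae_restrict_mem measurableSet_Ioc).mono fun t ht => ?_
    rw [Real.norm_of_nonneg (rpow_mul_maxRearr_nonneg q g ht.1)]
    exact mul_le_mul_of_nonneg_left (maxRearr_le hM ht.1) (Real.rpow_nonneg ht.1.le _)
  · have hint : IntegrableOn (fun t : ℝ => t ^ (1 / q - 1 - 1)) (Set.Ioi 1) :=
      integrableOn_Ioi_rpow_of_lt (by linarith) one_pos
    refine (hint.mul_const (∫ s in Set.Ioi 0, rearr g s)).mono' hmeas.aestronglyMeasurable ?_
    refine (ae_restrict_mem measurableSet_Ioi).mono fun t ht => ?_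
    have ht0 : 0 < t := one_pos.trans ht
    rw [Real.norm_of_nonneg (rpow_mul_maxRearr_nonneg q g ht0), Real.rpow_sub_one ht0.ne' (_ - 1),
      div_mul_eq_mul_div, mul_div_assoc]
    exact mul_le_mul_of_nonneg_left (maxRearr_le_integral_div hM ht0) (Real.rpow_nonneg ht0.le _)

lemma lintegral_rpow_mul_rearr_le_Lp1norm (hq : 1 < q) (hM : ∀ x, |g x| ≤ M) :
    ∫⁻ t in Set.Ioi (0 : ℝ), ENNReal.ofReal (t ^ (1 / q - 1)) * ENNReal.ofReal (rearr g t)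
      ≤ ENNReal.ofReal (Lp1norm q g) := by
  rw [Lp1norm_eq_integral_maxRearr,
    ofReal_integral_eq_lintegral_ofReal (integrableOn_rpow_mul_maxRearr hq hM)
      ((ae_restrict_mem measurableSet_Ioi).mono fun t ht => rpow_mul_maxRearr_nonneg q g ht)]
  refine setLIntegral_mono' measurableSet_Ioi fun t ht => ?_
  have hpow : 0 ≤ t ^ (1 / q - 1) := Real.rpow_nonneg (le_of_lt ht) _
  rw [← ofReal_mul hpow]
  exact ofReal_le_ofReal (mul_le_mul_of_nonneg_left (rearr_le_maxRearr hM ht) hpow)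

lemma lintegral_Ioo_rpow {r a : ℝ} (hr : -1 < r) (ha : 0 ≤ a) :
    ∫⁻ t in Set.Ioo 0 a, ENNReal.ofReal (t ^ r) = ENNReal.ofReal (a ^ (r + 1) / (r + 1)) := by
  have hint : IntegrableOn (fun t : ℝ => t ^ r) (Set.Ioo 0 a) :=
    (intervalIntegrable_iff_integrableOn_Ioo_of_le ha).1
      (intervalIntegral.intervalIntegrable_rpow' hr)
  rw [← ofReal_integral_eq_lintegral_ofReal hint
      ((ae_restrict_mem measurableSet_Ioo).mono fun t ht => Real.rpow_nonneg ht.1.le r),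
    ← integral_Ioc_eq_integral_Ioo, ← intervalIntegral.integral_of_le ha,
    integral_rpow (Or.inl hr), Real.zero_rpow (by linarith), sub_zero]

lemma lintegral_volume_le_abs_rpow_le_Lp1norm (hq : 1 < q) (hM : ∀ x, |g x| ≤ M)
    (hg : volume (Function.support g) ≠ ⊤) :
    ∫⁻ l in Set.Ioi (0 : ℝ), ENNReal.ofReal q * volume {x | l ≤ |g x|} ^ q⁻¹
      ≤ ENNReal.ofReal (Lp1norm q g) := by
  have hq0 : 0 < q := one_pos.trans hq
  refine le_trans ?_ (lintegral_rpow_mul_rearr_le_Lp1norm hq hM)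
  rw [lintegral_mul_ofReal_eq_lintegral_setLIntegral (by fun_prop) (aemeasurable_rearr hM)
    (rearr_nonneg g)]
  refine setLIntegral_mono' measurableSet_Ioi fun l hl => ?_
  set a := (volume {x | l ≤ |g x|}).toReal
  have hsub : Set.Ioo 0 a ⊆ {t | l ≤ rearr g t} := fun t ht => le_rearr hM hg ht.1.le ht.2
  calc ENNReal.ofReal q * volume {x | l ≤ |g x|} ^ q⁻¹
      = ENNReal.ofReal (a ^ q⁻¹ / q⁻¹) := by
        rw [div_inv_eq_mul, mul_comm, ofReal_mul (Real.rpow_nonneg toReal_nonneg _),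
          ← ofReal_rpow_of_nonneg toReal_nonneg (inv_nonneg.2 hq0.le),
          ofReal_toReal (volume_le_abs_ne_top hg hl)]
    _ = ∫⁻ t in Set.Ioo 0 a, ENNReal.ofReal (t ^ (1 / q - 1)) := by
        rw [lintegral_Ioo_rpow (by linarith [one_div_pos.2 hq0]) toReal_nonneg, sub_add_cancel,
          one_div]
    _ ≤ ∫⁻ t in {t | l ≤ rearr g t}, ENNReal.ofReal (t ^ (1 / q - 1))
          ∂volume.restrict (Set.Ioi 0) := by
        rw [← Measure.restrict_restrict_of_subset (Set.Ioo_subset_Ioi_self : Set.Ioo 0 a ⊆ _)]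
        exact lintegral_mono_set hsub

theorem lintegral_enorm_mul_le_wnorm_mul_Lp1norm (hpq : p.HolderConjugate q) (hf : Measurable f)
    (hg : Measurable g) (hM : ∀ x, |g x| ≤ M) (hsupp : volume (Function.support g) ≠ ⊤) :
    ∫⁻ x, ‖f x‖ₑ * ‖g x‖ₑ ≤ wnorm p f * ENNReal.ofReal (Lp1norm q g) := by
  have hlevel : Antitone fun l => volume {x | l ≤ |g x|} :=
    fun _ _ hl => measure_mono fun _ hx => hl.trans hx
  calc ∫⁻ x, ‖f x‖ₑ * ‖g x‖ₑ
      = ∫⁻ l in Set.Ioi (0 : ℝ), ∫⁻ x in {x | l ≤ |g x|}, ‖f x‖ₑ := by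
        simp_rw [Real.enorm_eq_ofReal_abs (g _)]
        exact lintegral_mul_ofReal_eq_lintegral_setLIntegral hf.enorm.aemeasurable
          hg.abs.aemeasurable fun x => abs_nonneg _
    _ ≤ ∫⁻ l in Set.Ioi (0 : ℝ), wnorm p f * (ENNReal.ofReal q * volume {x | l ≤ |g x|} ^ q⁻¹) :=
        setLIntegral_mono' measurableSet_Ioi fun l hl =>
          setLIntegral_enorm_le_wnorm_mul hpq hf (volume_le_abs_ne_top hsupp hl)
    _ = wnorm p f * ∫⁻ l in Set.Ioi (0 : ℝ), ENNReal.ofReal q * volume {x | l ≤ |g x|} ^ q⁻¹ :=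
        lintegral_const_mul _ ((hlevel.measurable.pow_const _).const_mul _)
    _ ≤ wnorm p f * ENNReal.ofReal (Lp1norm q g) := by
        gcongr
        exact lintegral_volume_le_abs_rpow_le_Lp1norm hpq.symm.lt hM hsupp

end LorentzNorm

section Oscillation

lemma lap_eq_laplacian {w : E4 → ℝ} (hw : ContDiff ℝ 2 w) : lap w = Δ w := by
  ext x
  rw [laplacian_eq_sum_fderiv_fderiv (EuclideanSpace.basisFun (Fin 4) ℝ)]
  simp only [lap, EuclideanSpace.basisFun_apply, fderiv_fderiv_apply hw]

lemma contDiff_lap {n : WithTop ℕ∞} {w : E4 → ℝ} (hw : ContDiff ℝ (n + 2) w) :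
    ContDiff ℝ n (lap w) := by
  replace hw : ContDiff ℝ (n + 1 + 1) w := by rwa [add_assoc, one_add_one_eq_two]
  exact ContDiff.sum fun i _ => contDiff_fderiv_apply (contDiff_fderiv_apply hw _) _

lemma wnorm_norm_fderiv_log_norm_ne_top :
    wnorm 4 (fun z : E4 => ‖fderiv ℝ (fun v : E4 => Real.log ‖v‖) z‖) ≠ ⊤ := by
  refine ne_top_of_le_ne_top (b := volume (ball (0 : E4) 1) ^ (1 / 4 : ℝ))
    (rpow_ne_top_of_nonneg (by norm_num) measure_ball_lt_top.ne) (iSup₂_le fun l hl => ?_)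
  have hl0 : 0 < l := hl
  have hsub : {z : E4 | l < |‖fderiv ℝ (fun v : E4 => Real.log ‖v‖) z‖|} ⊆ ball 0 l⁻¹ := by
    intro z hz
    rcases eq_or_ne z 0 with rfl | hz0
    · exact mem_ball_self (inv_pos.2 hl0)
    · rw [Set.mem_ofPred_eq, abs_norm, norm_fderiv_log_norm hz0] at hz
      exact mem_ball_zero_iff.2 ((lt_inv_comm₀ hl0 (norm_pos_iff.2 hz0)).1 hz)
  calc ENNReal.ofReal l *
        volume {z : E4 | l < |‖fderiv ℝ (fun v : E4 => Real.log ‖v‖) z‖|} ^ (1 / 4 : ℝ)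
      ≤ ENNReal.ofReal l * volume (ball (0 : E4) l⁻¹) ^ (1 / 4 : ℝ) := by gcongr
    _ = ENNReal.ofReal (l * (l⁻¹ ^ 4) ^ (1 / 4 : ℝ)) * volume (ball (0 : E4) 1) ^ (1 / 4 : ℝ) := by
        rw [Measure.addHaar_ball volume (0 : E4) (inv_nonneg.2 hl0.le), finrank_euclideanSpace_fin,
          mul_rpow_of_nonneg _ _ (by norm_num), ← mul_assoc,
          ofReal_rpow_of_nonneg (by positivity) (by norm_num), ofReal_mul hl0.le]
    _ = volume (ball (0 : E4) 1) ^ (1 / 4 : ℝ) := by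
        have hroot : (l⁻¹ ^ 4) ^ (1 / 4 : ℝ) = l⁻¹ := by
          simpa using Real.pow_rpow_inv_natCast (inv_nonneg.2 hl0.le) four_ne_zero
        rw [hroot, mul_inv_cancel₀ hl0.ne', ofReal_one, one_mul]

lemma abs_le_inv_bilaplacianMass_mul_wnorm_mul_Lp1norm {w : E4 → ℝ} (hw : ContDiff ℝ 2 w)
    (hlap : ContDiff ℝ 1 (lap w)) (hwc : HasCompactSupport w) (x : E4) :
    |w x| ≤ (bilaplacianMass (volume : Measure E4))⁻¹ *
      ((wnorm 4 (fun z => ‖fderiv ℝ (fun v : E4 => Real.log ‖v‖) z‖)).toReal *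
        Lp1norm (4 / 3) (fun y => ‖fderiv ℝ (lap w) y‖)) := by
  rw [lap_eq_laplacian hw] at hlap ⊢
  have hcont : Continuous fun y => ‖fderiv ℝ (Δ w) y‖ :=
    (hlap.continuous_fderiv one_ne_zero).norm
  have hcompact : HasCompactSupport fun y => ‖fderiv ℝ (Δ w) y‖ :=
    ((hasCompactSupport_laplacian hwc).fderiv ℝ).norm
  obtain ⟨M, hM⟩ := hcont.bounded_above_of_compact_support hcompact
  have hpair := lintegral_enorm_mul_le_wnorm_mul_Lp1norm (p := 4) (q := 4 / 3)
    (f := fun y => ‖fderiv ℝ (fun v : E4 => Real.log ‖v‖) (y - x)‖)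
    (Real.holderConjugate_iff.2 ⟨by norm_num, by norm_num⟩)
    ((measurable_fderiv ℝ _).comp (measurable_id.sub_const x)).norm hcont.measurable hM
    (ne_top_of_le_ne_top hcompact.isCompact.measure_lt_top.ne (measure_mono (subset_tsupport _)))
  simp only [enorm_norm] at hpair
  rw [wnorm_comp_sub_right 4 (fun z => ‖fderiv ℝ (fun v : E4 => Real.log ‖v‖) z‖),
    ← ofReal_toReal wnorm_norm_fderiv_log_norm_ne_top, ← ofReal_mul toReal_nonneg] at hpair
  rw [le_inv_mul_iff₀ (bilaplacianMass_pos finrank_euclideanSpace_fin)]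
  exact (ofReal_le_ofReal_iff (mul_nonneg toReal_nonneg (Lp1norm_nonneg _ _))).1
    ((ofReal_bilaplacianMass_mul_abs_le_lintegral finrank_euclideanSpace_fin hw hlap hwc x).trans
      hpair)

lemma abs_inv_measure_tsupport_mul_integral_le {X : Type*} [TopologicalSpace X] [MeasurableSpace X]
    {μ : Measure X} [IsFiniteMeasureOnCompacts μ] {f : X → ℝ} {B : ℝ}
    (hf : HasCompactSupport f) (hB0 : 0 ≤ B) (hB : ∀ x, |f x| ≤ B) :
    |(μ (tsupport f)).toReal⁻¹ * ∫ x, f x ∂μ| ≤ B := by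
  have hint : ‖∫ x in tsupport f, f x ∂μ‖ ≤ B * (μ (tsupport f)).toReal :=
    norm_setIntegral_le_of_norm_le_const hf.isCompact.measure_lt_top fun x _ => hB x
  rw [setIntegral_tsupport, norm_eq_abs] at hint
  rw [abs_mul, abs_of_nonneg (inv_nonneg.2 toReal_nonneg)]
  exact inv_mul_le_of_le_mul₀ toReal_nonneg hB0 (by rwa [mul_comm])

end Oscillation

theorem oscillation_bound_by_DLap_general :
    ∃ C : ℝ, 0 < C ∧ ∀ w : E4 → ℝ,
      ContDiff ℝ 2 w → ContDiff ℝ 1 (lap w) → HasCompactSupport w →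
      (∀ x : E4,
        |w x - (volume (tsupport w)).toReal⁻¹ * ∫ y, w y| ≤
          C * (wnorm 4 (fun z => ‖fderiv ℝ (fun v : E4 => Real.log ‖v‖) z‖)).toReal *
            Lp1norm (4/3) (fun y => ‖fderiv ℝ (fun z => lap w z) y‖)) ∧
      ∀ x y : E4, |w x - w y| ≤
          C * Lp1norm (4/3) (fun y => ‖fderiv ℝ (fun z => lap w z) y‖) := by
  set m := bilaplacianMass (volume : Measure E4)
  set N := (wnorm 4 (fun z => ‖fderiv ℝ (fun v : E4 => Real.log ‖v‖) z‖)).toReal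
  have hm : 0 < m := bilaplacianMass_pos finrank_euclideanSpace_fin
  have hN : 0 ≤ N := toReal_nonneg
  refine ⟨2 * m⁻¹ * (1 + N), by positivity, fun w hw hlap hwc => ?_⟩
  set L := Lp1norm (4/3) (fun y => ‖fderiv ℝ (fun z => lap w z) y‖)
  have hL : 0 ≤ L := Lp1norm_nonneg _ _
  have hsup (x : E4) : |w x| ≤ m⁻¹ * (N * L) :=
    abs_le_inv_bilaplacianMass_mul_wnorm_mul_Lp1norm hw hlap hwc x
  refine ⟨fun x => ?_, fun x y => ?_⟩
  · calc |w x - (volume (tsupport w)).toReal⁻¹ * ∫ y, w y|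
        ≤ |w x| + |(volume (tsupport w)).toReal⁻¹ * ∫ y, w y| := abs_sub _ _
      _ ≤ m⁻¹ * (N * L) + m⁻¹ * (N * L) := add_le_add (hsup x)
          (abs_inv_measure_tsupport_mul_integral_le hwc (by positivity) hsup)
      _ = 2 * m⁻¹ * 1 * N * L := by ring
      _ ≤ 2 * m⁻¹ * (1 + N) * N * L := by
          gcongr
          exact le_add_of_nonneg_right hN
  · calc |w x - w y| ≤ |w x| + |w y| := abs_sub _ _
      _ ≤ m⁻¹ * (N * L) + m⁻¹ * (N * L) := add_le_add (hsup x) (hsup y)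
      _ = 2 * m⁻¹ * N * L := by ring
      _ ≤ 2 * m⁻¹ * (1 + N) * L := by
          gcongr
          exact le_add_of_nonneg_left zero_le_one

/-- Oscillation estimate: for compactly supported `w̃ ∈ W^{3,1}(ℝ⁴)` with
`DΔw̃ ∈ L^{4/3,1}(ℝ⁴)`, one has
`|w̃(x) − ⨍ w̃| ≤ C ‖DG‖_{L^{4,∞}(ℝ⁴)} ‖DΔw̃‖_{L^{4/3,1}(ℝ⁴)}` for every `x`
(`G(x) = log|x|` the fundamental solution of `Δ²` in `ℝ⁴`), and in particular
`osc w̃ ≤ C ‖DΔw̃‖_{L^{4/3,1}(ℝ⁴)}`. -/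
theorem oscillation_bound_by_DLap :
    ∃ C : ℝ, 0 < C ∧ ∀ w : E4 → ℝ,
      ContDiff ℝ 3 w → HasCompactSupport w →
      (∀ x : E4,
        |w x - (volume (tsupport w)).toReal⁻¹ * ∫ y, w y| ≤
          C * (wnorm 4 (fun z => ‖fderiv ℝ (fun v : E4 => Real.log ‖v‖) z‖)).toReal *
            Lp1norm (4/3) (fun y => ‖fderiv ℝ (fun z => lap w z) y‖)) ∧
      ∀ x y : E4, |w x - w y| ≤
          C * Lp1norm (4/3) (fun y => ‖fderiv ℝ (fun z => lap w z) y‖) := by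
  obtain ⟨C, hC, hbound⟩ := oscillation_bound_by_DLap_general
  exact ⟨C, hC, fun w hw => hbound w (hw.of_le (by norm_num)) (contDiff_lap hw)⟩
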